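/- Under the LCC setup, for every m, every bounded linear operator L : X_m → X_m with ‖L‖ = 1, and every j ≥ 1, one has w_{m+j}(L) ≤ ν(ι ∘ L ∘ Q_m), where ν(ι ∘ L ∘ Q_m) is the numerical radius in X of the operator x ↦ L(Q_m x) (regarded as an operator on X via the inclusion ι : X_m ⊆ X). -/

import Mathlib

open Filter Topology

variable {X : Type*} [NormedAddCommGroup X] [NormedSpace ℝ X]

/-- The numerical radius of a bounded linear operator on a real normed space. -/
noncomputable def nu {Z : Type*} [NormedAddCommGroup Z] [NormedSpace ℝ Z] (T : Z →L[ℝ] Z) : ℝ :=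
  sSup {r : ℝ | ∃ (x : Z) (f : Z →L[ℝ] ℝ), ‖x‖ = 1 ∧ ‖f‖ = 1 ∧ f x = 1 ∧ r = |f (T x)|}

/-- The numerical index of a real normed space. -/
noncomputable def nIndex (Z : Type*) [NormedAddCommGroup Z] [NormedSpace ℝ Z] : ℝ :=
  sInf {r : ℝ | ∃ T : Z →L[ℝ] Z, ‖T‖ = 1 ∧ r = nu T}

/-- The (continuous) inclusion map between nested submodules. -/
noncomputable def incl {p q : Submodule ℝ X} (h : p ≤ q) : p →L[ℝ] q :=
  (Submodule.inclusion h).mkContinuous 1 (fun x => by rw [one_mul]; exact le_of_eq rfl)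

/-- `QQ Xm P m j = Q_{m,j} = P_m ∘ P_{m+1} ∘ ⋯ ∘ P_{m+j-1} : X_{m+j} → X_m`
(with `Q_{m,0} = id`). -/
noncomputable def QQ (Xm : ℕ → Submodule ℝ X) (P : ∀ m, Xm (m + 1) →L[ℝ] Xm m) (m : ℕ) :
    ∀ j, Xm (m + j) →L[ℝ] Xm m
  | 0 => ContinuousLinearMap.id ℝ (Xm m)
  | (j + 1) => (QQ Xm P m j).comp (P (m + j))

/-- `w Xm hmono P m j L = w_{m+j}(L) = ν(ι ∘ L ∘ Q_{m,j})`, the numerical radius in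
`X_{m+j}` of the operator `x ↦ L (Q_{m,j} x)`. -/
noncomputable def w (Xm : ℕ → Submodule ℝ X) (hmono : Monotone Xm)
    (P : ∀ m, Xm (m + 1) →L[ℝ] Xm m) (m j : ℕ) (L : Xm m →L[ℝ] Xm m) : ℝ :=
  nu ((incl (hmono (Nat.le_add_right m j))).comp (L.comp (QQ Xm P m j)))

/-- The Local Characterization Condition (LCC): for every `m`, every norming functional
`f ∈ X_{m+1}*` of a unit vector `x ∈ X_{m+1}`, some multiple of `f` restricted to `X_m`
is a norming functional for `P_m x` in `X_m*`. -/
def LCC (Xm : ℕ → Submodule ℝ X) (hmono : Monotone Xm)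
    (P : ∀ m, Xm (m + 1) →L[ℝ] Xm m) : Prop :=
  ∀ (m : ℕ) (x : Xm (m + 1)) (f : Xm (m + 1) →L[ℝ] ℝ), ‖x‖ = 1 → ‖f‖ = 1 → f x = 1 →
    ∃ b : ℝ, ‖b • f.comp (incl (hmono (Nat.le_succ m)))‖ = 1 ∧
      b * f (incl (hmono (Nat.le_succ m)) (P m x)) = ‖P m x‖

/-!
The projections are compatible with the inclusions: restricting `Q_{m,i}` to `X_{m+j}` gives
`Q_{m,j}` for `j ≤ i`, because `P_{m+i}` fixes `X_{m+i}`. Hence the limit `Q_m` restricts to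
`Q_{m,j}` on `X_{m+j}`, and `ι ∘ L ∘ Q_m` extends the operator whose numerical radius is
`w_{m+j}(L)`. The numerical radius can only grow under such an extension: by Hahn–Banach, a
norming functional of a unit vector of `X_{m+j}` extends to one on `X`.
-/

theorem exists_extension_norm_eq_of_linearIsometry {𝕜 E F : Type*}
    [NontriviallyNormedField 𝕜] [IsRCLikeNormedField 𝕜]
    [NormedAddCommGroup E] [NormedSpace 𝕜 E] [NormedAddCommGroup F] [NormedSpace 𝕜 F]
    (i : E →ₗᵢ[𝕜] F) (f : StrongDual 𝕜 E) :
    ∃ g : StrongDual 𝕜 F, (∀ x, g (i x) = f x) ∧ ‖g‖ = ‖f‖ := by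
  let e := i.equivRange
  obtain ⟨g, hgf, hg⟩ := exists_extension_norm_eq i.range (f.comp (e.symm : i.range →L[𝕜] E))
  refine ⟨g, fun x => ?_, hg.trans (f.opNorm_comp_linearIsometryEquiv e.symm)⟩
  calc g (i x) = f (e.symm (e x)) := hgf (e x)
    _ = f x := by rw [e.symm_apply_apply]

section NumericalRadius

variable {Y Z : Type*} [NormedAddCommGroup Y] [NormedSpace ℝ Y]
  [NormedAddCommGroup Z] [NormedSpace ℝ Z]

theorem abs_apply_le_nu (T : Z →L[ℝ] Z) {z : Z} {f : Z →L[ℝ] ℝ}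
    (hz : ‖z‖ = 1) (hf : ‖f‖ = 1) (hfz : f z = 1) : |f (T z)| ≤ nu T := by
  refine le_csSup ⟨‖T‖, ?_⟩ ⟨z, f, hz, hf, hfz, rfl⟩
  rintro _ ⟨x, g, hx, hg, -, rfl⟩
  calc |g (T x)| ≤ ‖g‖ * ‖T x‖ := g.le_opNorm (T x)
    _ ≤ ‖T‖ := by simpa only [hg, hx, one_mul, mul_one] using T.le_opNorm x

theorem nu_nonneg (T : Z →L[ℝ] Z) : 0 ≤ nu T := by
  refine Real.sSup_nonneg ?_
  rintro _ ⟨x, f, -, -, -, rfl⟩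
  exact abs_nonneg (f (T x))

-- The bound `0 ≤ c` covers the zero space, where the supremum is over the empty set.
theorem nu_le {T : Z →L[ℝ] Z} {c : ℝ} (hc : 0 ≤ c)
    (h : ∀ (z : Z) (f : Z →L[ℝ] ℝ), ‖z‖ = 1 → ‖f‖ = 1 → f z = 1 → |f (T z)| ≤ c) :
    nu T ≤ c := by
  refine Real.sSup_le ?_ hc
  rintro _ ⟨z, f, hz, hf, hfz, rfl⟩
  exact h z f hz hf hfz

theorem nu_le_nu_of_semiconj (i : Y →ₗᵢ[ℝ] Z) {S : Y →L[ℝ] Y} {T : Z →L[ℝ] Z}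
    (h : Function.Semiconj i S T) : nu S ≤ nu T := by
  refine nu_le (nu_nonneg T) fun y f hy hf hfy => ?_
  obtain ⟨g, hgf, hg⟩ := exists_extension_norm_eq_of_linearIsometry i f
  calc |f (S y)| = |g (T (i y))| := by rw [← h y, hgf]
    _ ≤ nu T := abs_apply_le_nu T ((i.norm_map y).trans hy) (hg.trans hf) ((hgf y).trans hfy)

end NumericalRadius

section Projections

variable {Xm : ℕ → Submodule ℝ X} {P : ∀ m, Xm (m + 1) →L[ℝ] Xm m} {m : ℕ}

theorem QQ_comp_incl (hmono : Monotone Xm)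
    (hPid : ∀ (m : ℕ) (y : Xm (m + 1)), (y : X) ∈ Xm m → ((P m y : Xm m) : X) = (y : X))
    {j i : ℕ} (hji : j ≤ i) :
    (QQ Xm P m i).comp (incl (hmono (Nat.add_le_add_left hji m))) = QQ Xm P m j := by
  induction i, hji using Nat.le_induction with
  | base => rfl
  | succ i hji ih =>
    ext1 x
    have hx : (x : X) ∈ Xm (m + i) := hmono (Nat.add_le_add_left hji m) x.2
    have hPx : P (m + i) (incl (hmono (Nat.add_le_add_left (hji.trans i.le_succ) m)) x) =
        incl (hmono (Nat.add_le_add_left hji m)) x :=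
      Subtype.ext (hPid (m + i) _ hx)
    calc QQ Xm P m i (P (m + i) (incl _ x)) = QQ Xm P m i (incl _ x) := congrArg _ hPx
      _ = QQ Xm P m j x := DFunLike.congr_fun ih x

theorem QQ_apply_eq_of_frequently (hmono : Monotone Xm)
    (hPid : ∀ (m : ℕ) (y : Xm (m + 1)), (y : X) ∈ Xm m → ((P m y : Xm m) : X) = (y : X))
    {j : ℕ} {x : Xm (m + j)} {y : Xm m}
    (hy : ∃ᶠ i in atTop, ∃ h : (x : X) ∈ Xm (m + i), QQ Xm P m i ⟨x, h⟩ = y) :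
    QQ Xm P m j x = y := by
  obtain ⟨i, hji, _, hi⟩ := frequently_atTop.mp hy j
  exact (DFunLike.congr_fun (QQ_comp_incl hmono hPid hji) x).symm.trans hi

end Projections

theorem stmt12_general
    (Xm : ℕ → Submodule ℝ X) (hmono : Monotone Xm)
    (P : ∀ m, Xm (m + 1) →L[ℝ] Xm m)
    (hPid : ∀ (m : ℕ) (y : Xm (m + 1)), (y : X) ∈ Xm m → ((P m y : Xm m) : X) = (y : X))
    (m : ℕ) (Qm : X →L[ℝ] Xm m)
    (hQlim : ∀ (k : ℕ) (x : X), x ∈ Xm k → ∃ J : ℕ, ∀ j, J ≤ j →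
      ∃ h : x ∈ Xm (m + j), QQ Xm P m j ⟨x, h⟩ = Qm x)
    (L : Xm m →L[ℝ] Xm m) (j : ℕ) :
    w Xm hmono P m j L ≤ nu ((Xm m).subtypeL.comp (L.comp Qm)) := by
  have hQ (x : Xm (m + j)) : QQ Xm P m j x = Qm x :=
    QQ_apply_eq_of_frequently hmono hPid
      (eventually_atTop.mpr (hQlim (m + j) x x.2)).frequently
  refine nu_le_nu_of_semiconj (Xm (m + j)).subtypeₗᵢ fun x => ?_
  exact congrArg (fun y => (L y : X)) (hQ x)

/-- Under the LCC setup, for every `m`, every norm-one operator `L : X_m → X_m` and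
every `j ≥ 1`, one has `w_{m+j}(L) ≤ ν(ι ∘ L ∘ Q_m)`, the numerical radius in `X`
of `x ↦ L (Q_m x)`. -/
theorem stmt12 [CompleteSpace X]
    (Xm : ℕ → Submodule ℝ X) (hmono : Monotone Xm)
    (hclosed : ∀ m, IsClosed (Xm m : Set X))
    (hdense : Dense (⋃ m, (Xm m : Set X)))
    (P : ∀ m, Xm (m + 1) →L[ℝ] Xm m)
    (hPnorm : ∀ m, ‖P m‖ = 1)
    (hPid : ∀ (m : ℕ) (y : Xm (m + 1)), (y : X) ∈ Xm m → ((P m y : Xm m) : X) = (y : X))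
    (m : ℕ) (Qm : X →L[ℝ] Xm m) (hQnorm : ‖Qm‖ = 1)
    (hQid : ∀ x : X, x ∈ Xm m → ((Qm x : X) = x))
    (hQlim : ∀ (k : ℕ) (x : X), x ∈ Xm k → ∃ J : ℕ, ∀ j, J ≤ j →
      ∃ h : x ∈ Xm (m + j), QQ Xm P m j ⟨x, h⟩ = Qm x)
    (L : Xm m →L[ℝ] Xm m) (hL : ‖L‖ = 1) :
    ∀ j : ℕ, 1 ≤ j →
      w Xm hmono P m j L ≤ nu ((Xm m).subtypeL.comp (L.comp Qm)) := by
  intro j _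
  exact stmt12_general Xm hmono P hPid m Qm hQlim L j
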